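/- Let Γ be a finite simple graph with no central vertices, let (G_v) be a family of nontrivial groups indexed by the vertices of Γ, and let 𝒢 = 𝒢(Γ, {G_v}) be the associated graph product. Let N be a finitely generated full normal subgroup of 𝒢. Then for every vertex v of Γ, the subgroup N · 𝒢(lk(v)) generated by N together with 𝒢(lk(v)) has finite index in 𝒢. -/

import Mathlib

/-- The set of defining relators of the graph product: commutators of elements of
vertex groups attached to adjacent vertices. -/
def graphProductRels {V : Type} (Γ : SimpleGraph V) (G : V → Type)
    [∀ v, Group (G v)] : Subgroup (Monoid.CoprodI G) :=
  Subgroup.normalClosure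
    { x | ∃ (v w : V) (g : G v) (h : G w), Γ.Adj v w ∧
        x = Monoid.CoprodI.of g * Monoid.CoprodI.of h *
              (Monoid.CoprodI.of g)⁻¹ * (Monoid.CoprodI.of h)⁻¹ }

instance graphProductRels.normal {V : Type} (Γ : SimpleGraph V) (G : V → Type)
    [∀ v, Group (G v)] : (graphProductRels Γ G).Normal :=
  Subgroup.normalClosure_normal

/-- The graph product of the groups `G v` over the simple graph `Γ`. -/
abbrev GraphProduct {V : Type} (Γ : SimpleGraph V) (G : V → Type)
    [∀ v, Group (G v)] : Type :=
  Monoid.CoprodI G ⧸ graphProductRels Γ G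

/-- The subgroup `𝒢(Δ)` of the graph product generated by the images of the vertex
groups attached to the vertices in the set `S`. -/
def vertexSubgroup {V : Type} (Γ : SimpleGraph V) (G : V → Type)
    [∀ v, Group (G v)] (S : Set V) : Subgroup (GraphProduct Γ G) :=
  Subgroup.closure
    { x | ∃ v ∈ S, ∃ g : G v,
        x = (QuotientGroup.mk (Monoid.CoprodI.of g) : GraphProduct Γ G) }

/-- A set of vertices `S` is a join of two (nonempty) subgraphs if it can be split into
two nonempty pieces every two vertices of which (one from each piece) are adjacent. -/
def IsJoinOfTwo {V : Type} (Γ : SimpleGraph V) (S : Set V) : Prop :=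
  ∃ A B : Set V, A.Nonempty ∧ B.Nonempty ∧ Disjoint A B ∧ A ∪ B = S ∧
    ∀ a ∈ A, ∀ b ∈ B, Γ.Adj a b

/-- `P : Fin k → Set V` is a join decomposition of `Γ` into join-indecomposable pieces:
the pieces are nonempty, partition the vertices, any two vertices in distinct pieces are
adjacent, and no piece is itself a join of two nonempty subgraphs. -/
def IsJoinDecomposition {V : Type} (Γ : SimpleGraph V) {k : ℕ} (P : Fin k → Set V) : Prop :=
  (∀ i, (P i).Nonempty) ∧ (∀ v : V, ∃! i, v ∈ P i) ∧
    (∀ i j, i ≠ j → ∀ a ∈ P i, ∀ b ∈ P j, Γ.Adj a b) ∧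
    (∀ i, ¬ IsJoinOfTwo Γ (P i))

/-- A subgroup `N` of the graph product is full if for a join decomposition of `Γ` into
join-indecomposable pieces `Γ_1, …, Γ_k`, `N` intersects each `𝒢(Γ_i)` nontrivially. -/
def IsFullSubgroup {V : Type} (Γ : SimpleGraph V) (G : V → Type)
    [∀ v, Group (G v)] (N : Subgroup (GraphProduct Γ G)) : Prop :=
  ∀ (k : ℕ) (P : Fin k → Set V), IsJoinDecomposition Γ P →
    ∀ i, N ⊓ vertexSubgroup Γ G (P i) ≠ ⊥

/-- A vertex is central if it is adjacent to every other vertex. -/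
def IsCentralVertex {V : Type} (Γ : SimpleGraph V) (v : V) : Prop :=
  ∀ w : V, w ≠ v → Γ.Adj v w

/-- A group is abelian-by-finite if it has an abelian normal subgroup of finite index. -/
def AbelianByFinite (Q : Type) [Group Q] : Prop :=
  ∃ A : Subgroup Q, A.Normal ∧ A.FiniteIndex ∧ ∀ x y : A, x * y = y * x

/-- A group is finite-by-abelian if it has a finite normal subgroup with abelian quotient,
equivalently a finite normal subgroup containing all commutators. -/
def FiniteByAbelian (Q : Type) [Group Q] : Prop :=
  ∃ F : Subgroup Q, F.Normal ∧ Finite F ∧ ∀ x y : Q, x * y * x⁻¹ * y⁻¹ ∈ F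


/-! ### Part 1: reduced words in free products of copies of a group -/

namespace GPAux

open Monoid

section Words

variable {C K : Type} [Group K]

/-- Free product of copies of `K` indexed by `C`. -/
abbrev FP (C K : Type) [Group K] : Type := CoprodI (fun _ : C => K)

/-- The product of a list of letters. -/
def lprod (l : List (Σ _ : C, K)) : FP C K :=
  (l.map fun x => (CoprodI.of (i := x.1) x.2 : FP C K)).prod

/-- Reduced lists. -/
def Red (l : List (Σ _ : C, K)) : Prop :=
  (∀ x ∈ l, x.2 ≠ 1) ∧ l.IsChain fun x y => x.1 ≠ y.1

open Classical in
/-- The reduced list of an element. -/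
noncomputable def nf (x : FP C K) : List (Σ _ : C, K) :=
  (CoprodI.Word.equiv (M := fun _ : C => K) x).toList

theorem nf_red (x : FP C K) : Red (nf x) := by
  classical
  exact ⟨(CoprodI.Word.equiv (M := fun _ : C => K) x).ne_one,
    (CoprodI.Word.equiv (M := fun _ : C => K) x).chain_ne⟩

theorem lprod_nf (x : FP C K) : lprod (nf x) = x := by
  classical
  exact (CoprodI.Word.equiv (M := fun _ : C => K)).symm_apply_apply x

theorem nf_lprod {l : List (Σ _ : C, K)} (h : Red l) : nf (lprod l) = l := by
  classical
  have := (CoprodI.Word.equiv (M := fun _ : C => K)).apply_symm_apply ⟨l, h.1, h.2⟩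
  exact congrArg CoprodI.Word.toList this

theorem nf_eq {l : List (Σ _ : C, K)} (h : Red l) {x : FP C K} (hx : lprod l = x) : nf x = l := by
  rw [← hx, nf_lprod h]

theorem lprod_append (l l' : List (Σ _ : C, K)) : lprod (l ++ l') = lprod l * lprod l' := by
  simp [lprod]

theorem lprod_single (c : C) (a : K) :
    lprod [(⟨c, a⟩ : Σ _ : C, K)] = CoprodI.of (M := fun _ : C => K) (i := c) a := by
  simp [lprod]

theorem nf_one : nf (1 : FP C K) = [] :=
  nf_eq ⟨by simp, by simp⟩ (by simp [lprod])

theorem nf_of (c : C) {a : K} (ha : a ≠ 1) :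
    nf (CoprodI.of (M := fun _ : C => K) (i := c) a) = [⟨c, a⟩] :=
  nf_eq ⟨by simpa using ha, by simp⟩ (lprod_single c a)

theorem lprod_inv (l : List (Σ _ : C, K)) :
    lprod ((l.map fun x => (⟨x.1, x.2⁻¹⟩ : Σ _ : C, K)).reverse) = (lprod l)⁻¹ := by
  simp only [lprod, List.prod_inv_reverse, List.map_reverse, List.map_map]
  congr 2

theorem nf_inv (x : FP C K) :
    nf x⁻¹ = ((nf x).map fun x => (⟨x.1, x.2⁻¹⟩ : Σ _ : C, K)).reverse := by
  refine nf_eq ⟨?_, ?_⟩ (by rw [lprod_inv, lprod_nf])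
  · intro y hy
    simp only [List.mem_reverse, List.mem_map] at hy
    obtain ⟨z, hz, rfl⟩ := hy
    simpa using (nf_red x).1 z hz
  · rw [List.isChain_reverse, List.isChain_map]
    exact (nf_red x).2.imp fun a b h => h.symm

/-- Index of the first letter. -/
noncomputable def fst (x : FP C K) : Option C := (nf x).head?.map Sigma.fst

theorem fst_inv (x : FP C K) : fst x⁻¹ = (nf x).getLast?.map Sigma.fst := by
  rw [fst, nf_inv, List.head?_reverse, List.getLast?_map, Option.map_map]
  rfl

theorem fst_eq_none {x : FP C K} : fst x = none ↔ x = 1 := by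
  constructor
  · intro h
    simp only [fst, Option.map_eq_none_iff, List.head?_eq_none_iff] at h
    rw [← lprod_nf x, h]; simp [lprod]
  · rintro rfl
    simp [fst, nf_one]

theorem nf_mul {x y : FP C K} (h : fst x⁻¹ ≠ fst y) : nf (x * y) = nf x ++ nf y := by
  refine nf_eq ⟨?_, ?_⟩ (by rw [lprod_append, lprod_nf, lprod_nf])
  · intro z hz
    rcases List.mem_append.1 hz with hz | hz
    · exact (nf_red x).1 z hz
    · exact (nf_red y).1 z hz
  · rw [List.isChain_append]
    refine ⟨(nf_red x).2, (nf_red y).2, ?_⟩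
    intro a ha b hb hab
    apply h
    rw [fst_inv, fst]
    simp only [Option.mem_def] at ha hb
    rw [ha, hb]; simp [hab]

theorem fst_mul {x y : FP C K} (hx : x ≠ 1) (h : fst x⁻¹ ≠ fst y) : fst (x * y) = fst x := by
  have : nf x ≠ [] := by
    intro h
    apply hx
    rw [← lprod_nf x, h]; simp [lprod]
  rw [fst, nf_mul h, fst, List.head?_append_of_ne_nil _ this]

/-- multiplying on the right by a letter only changes the first index in special cases -/
theorem fst_mul_of {x : FP C K} {d c : C} {a : K}
    (h : ¬ (fst x = some c ↔ fst (x * CoprodI.of (M := fun _ : C => K) (i := d) a) = some c)) :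
    d = c ∧ (x = 1 ∨ x = CoprodI.of (M := fun _ : C => K) (i := d) a⁻¹) := by
  by_cases ha : a = 1
  · subst ha; simp at h
  have hfa : fst (CoprodI.of (M := fun _ : C => K) (i := d) a) = some d := by
    simp [fst, nf_of d ha]
  by_cases hx : x = 1
  · subst hx
    rw [one_mul, hfa, fst_eq_none.2 rfl] at h
    simp at h
    exact ⟨h, Or.inl rfl⟩
  by_cases hl : fst x⁻¹ = some d
  · rcases List.eq_nil_or_concat' (nf x) with h0 | ⟨l, ⟨d', b⟩, h0⟩
    · exact absurd (by rw [← lprod_nf x, h0]; simp [lprod]) hx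
    have hd : d' = d := by
      rw [fst_inv, h0] at hl
      simpa using hl
    subst hd
    have hxl : x = lprod l * CoprodI.of (M := fun _ : C => K) (i := d') b := by
      rw [← lprod_single, ← lprod_append, ← h0, lprod_nf]
    have hr := nf_red x
    rw [h0] at hr
    have hrl : Red l :=
      ⟨fun z hz => hr.1 z (List.mem_append_left _ hz), (List.isChain_append.1 hr.2).1⟩
    have hxa : x * CoprodI.of (M := fun _ : C => K) (i := d') a =
        lprod l * CoprodI.of (M := fun _ : C => K) (i := d') (b * a) := by
      rw [hxl, mul_assoc, ← map_mul]
    have hfx : fst x = (l ++ [(⟨d', b⟩ : Σ _ : C, K)]).head?.map Sigma.fst := by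
      rw [fst, h0]
    by_cases hba : b * a = 1
    · have hxa' : fst (x * CoprodI.of (M := fun _ : C => K) (i := d') a)
          = l.head?.map Sigma.fst := by
        rw [hxa, hba, map_one, mul_one, fst, nf_lprod hrl]
      rw [hxa', hfx] at h
      cases l with
      | nil =>
        have hb : b = a⁻¹ := eq_inv_of_mul_eq_one_left hba
        simp at h
        refine ⟨h, Or.inr ?_⟩
        rw [hxl, hb]; simp [lprod]
      | cons z l => simp at h
    · exfalso
      have hred : Red (l ++ [(⟨d', b * a⟩ : Σ _ : C, K)]) := by
        refine ⟨?_, ?_⟩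
        · intro z hz
          rcases List.mem_append.1 hz with hz | hz
          · exact hrl.1 z hz
          · simp at hz; subst hz; exact hba
        · have := List.isChain_append.1 hr.2
          rw [List.isChain_append]
          refine ⟨this.1, by simp, ?_⟩
          intro p hp q hq
          have h3 := this.2.2 p hp ⟨d', b⟩ (by simp)
          simp at hq; subst hq; exact h3
      have hxa' : fst (x * CoprodI.of (M := fun _ : C => K) (i := d') a)
          = (l ++ [(⟨d', b * a⟩ : Σ _ : C, K)]).head?.map Sigma.fst := by
        rw [fst, nf_eq hred]
        rw [lprod_append, lprod_single, hxa]
      rw [hxa', hfx] at h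
      cases l <;> simp at h
  · exfalso
    apply h
    rw [fst_mul hx (by rw [hfa]; exact hl)]

end Words

section Perm

variable {A C K : Type} [Group A] [MulAction A C] [Group K]

/-- permuting the indices -/
def permHom (g : A) : FP C K →* FP C K :=
  CoprodI.lift fun c => (CoprodI.of (M := fun _ : C => K) (i := g • c))

@[simp]
theorem permHom_of (g : A) (c : C) (a : K) :
    permHom g (CoprodI.of (M := fun _ : C => K) (i := c) a) =
      CoprodI.of (M := fun _ : C => K) (i := g • c) a := by
  simp [permHom]

theorem permHom_one : (permHom (1 : A) : FP C K →* FP C K) = MonoidHom.id _ := by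
  refine CoprodI.ext_hom _ _ fun c => ?_
  ext a
  simp

theorem permHom_mul (g h : A) :
    (permHom (g * h) : FP C K →* FP C K) = (permHom g).comp (permHom h) := by
  refine CoprodI.ext_hom _ _ fun c => ?_
  ext a
  simp [mul_smul]

/-- the permutation action as automorphisms -/
def permAut : A →* MulAut (FP C K) where
  toFun g := MonoidHom.toMulEquiv (permHom g) (permHom g⁻¹)
    (by rw [← permHom_mul]; simp [permHom_one]) (by rw [← permHom_mul]; simp [permHom_one])
  map_one' := by
    ext x
    exact DFunLike.congr_fun (permHom_one (A := A) (C := C) (K := K)) x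
  map_mul' g h := by
    ext x
    exact DFunLike.congr_fun (permHom_mul (A := A) (C := C) (K := K) g h) x

@[simp]
theorem permAut_of (g : A) (c : C) (a : K) :
    permAut g (CoprodI.of (M := fun _ : C => K) (i := c) a) =
      CoprodI.of (M := fun _ : C => K) (i := g • c) a :=
  permHom_of g c a

theorem nf_perm (g : A) (x : FP C K) :
    nf (permAut g x) = (nf x).map fun z => (⟨g • z.1, z.2⟩ : Σ _ : C, K) := by
  refine nf_eq ⟨?_, ?_⟩ ?_
  · intro y hy
    simp only [List.mem_map] at hy
    obtain ⟨z, hz, rfl⟩ := hy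
    exact (nf_red x).1 z hz
  · rw [List.isChain_map]
    exact (nf_red x).2.imp fun a b h h' => h (smul_left_cancel g h')
  · conv_rhs => rw [← lprod_nf x]
    simp only [lprod, List.map_map, map_list_prod]
    congr 1

theorem fst_perm (g : A) (x : FP C K) : fst (permAut g x) = (fst x).map (g • ·) := by
  rw [fst, nf_perm, fst, List.head?_map, Option.map_map, Option.map_map]
  rfl

/-- The semidirect product. -/
abbrev SP (A C K : Type) [Group A] [MulAction A C] [Group K] : Type :=
  FP C K ⋊[(permAut : A →* MulAut (FP C K))] A

theorem SP_key {f g : SP A C K} {c : C} (hf : fst f.left = some c)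
    (h : fst (f⁻¹).left ≠ fst g.left) :
    fst (f * g).left = some c ∧
      (nf (f * g).left).length = (nf f.left).length + (nf g.left).length := by
  have hne : f.left ≠ 1 := by
    intro h1
    rw [fst_eq_none.2 h1] at hf
    cases hf
  have h' : fst (f.left)⁻¹ ≠ fst (permAut f.right g.left) := by
    intro h1
    apply h
    rw [SemidirectProduct.inv_left, fst_perm, h1, fst_perm, Option.map_map]
    convert Option.map_id' using 2
    ext x
    simp
  rw [SemidirectProduct.mul_left]
  refine ⟨by rw [fst_mul hne h', hf], ?_⟩
  rw [nf_mul h', nf_perm]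
  simp

theorem nf_pos {x : FP C K} {c : C} (h : fst x = some c) : 0 < (nf x).length := by
  rw [List.length_pos_iff]
  rintro h0
  simp [fst, h0] at h

end Perm

end GPAux

/-! ### Part 2: the graph product as a semidirect product -/

namespace GPAux

open Monoid

section GP

variable {V : Type} (Γ : SimpleGraph V) (G : V → Type) [∀ v, Group (G v)]

/-- inclusion of vertex groups -/
def gen (u : V) : G u →* GraphProduct Γ G :=
  (QuotientGroup.mk' (graphProductRels Γ G)).comp (CoprodI.of (M := G) (i := u))

variable {Γ G}

theorem gen_comm {u w : V} (h : Γ.Adj u w) (a : G u) (b : G w) :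
    Commute (gen Γ G u a) (gen Γ G w b) := by
  rw [← commutatorElement_eq_one_iff_commute, commutatorElement_def]
  simp only [gen, MonoidHom.comp_apply, ← map_mul, ← map_inv]
  rw [QuotientGroup.mk'_apply, QuotientGroup.eq_one_iff]
  exact Subgroup.subset_normalClosure ⟨u, w, a, b, h, rfl⟩

/-- universal property -/
def gplift {L : Type} [Group L] (f : ∀ u, G u →* L)
    (hf : ∀ u w, Γ.Adj u w → ∀ (a : G u) (b : G w), Commute (f u a) (f w b)) :
    GraphProduct Γ G →* L :=
  QuotientGroup.lift (graphProductRels Γ G) (CoprodI.lift f) (by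
    intro x hx
    have : graphProductRels Γ G ≤ (CoprodI.lift f).ker := by
      refine Subgroup.normalClosure_le_normal ?_
      rintro _ ⟨u, w, a, b, h, rfl⟩
      have := commutatorElement_eq_one_iff_commute.2 (hf u w h a b)
      rw [commutatorElement_def] at this
      simpa [MonoidHom.mem_ker] using this
    exact this hx)

@[simp]
theorem gplift_gen {L : Type} [Group L] (f : ∀ u, G u →* L)
    (hf : ∀ u w, Γ.Adj u w → ∀ (a : G u) (b : G w), Commute (f u a) (f w b)) (u : V) (a : G u) :
    gplift f hf (gen Γ G u a) = f u a := by
  have : gplift f hf (gen Γ G u a) = CoprodI.lift f (CoprodI.of (M := G) a) := rfl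
  rw [this, CoprodI.lift_of]

theorem mem_of_gens {P : Subgroup (GraphProduct Γ G)} (h : ∀ u a, gen Γ G u a ∈ P)
    (x : GraphProduct Γ G) : x ∈ P := by
  obtain ⟨y, rfl⟩ := QuotientGroup.mk'_surjective _ x
  induction y using CoprodI.induction_on with
  | one => rw [map_one]; exact P.one_mem
  | of i m => exact h i m
  | mul x y hx hy => rw [map_mul]; exact P.mul_mem hx hy

theorem gp_hom_ext {L : Type} [Group L] {f g : GraphProduct Γ G →* L}
    (h : ∀ u a, f (gen Γ G u a) = g (gen Γ G u a)) (x : GraphProduct Γ G) : f x = g x :=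
  mem_of_gens (P := f.eqLocus g) h x

theorem gen_mem {S : Set V} {u : V} (hu : u ∈ S) (a : G u) :
    gen Γ G u a ∈ vertexSubgroup Γ G S :=
  Subgroup.subset_closure ⟨u, hu, a, rfl⟩

theorem vertexSubgroup_le {S : Set V} {P : Subgroup (GraphProduct Γ G)}
    (h : ∀ u ∈ S, ∀ a, gen Γ G u a ∈ P) : vertexSubgroup Γ G S ≤ P := by
  rw [vertexSubgroup, Subgroup.closure_le]
  rintro _ ⟨u, hu, a, rfl⟩
  exact h u hu a

theorem vertexSubgroup_mono {S T : Set V} (h : S ⊆ T) :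
    vertexSubgroup Γ G S ≤ vertexSubgroup Γ G T :=
  vertexSubgroup_le fun _ hu a => gen_mem (h hu) a

open Classical in
/-- the endomorphism killing one vertex group -/
noncomputable def kill (u : V) : GraphProduct Γ G →* GraphProduct Γ G :=
  gplift (fun w => if w = u then 1 else gen Γ G w) (by
    intro w w' h a b
    split_ifs <;> simp [gen_comm h])

theorem kill_self (u : V) (a : G u) : kill u (gen Γ G u a) = 1 := by
  simp [kill]

theorem kill_ne {u w : V} (h : w ≠ u) (a : G w) : kill u (gen Γ G w a) = gen Γ G w a := by
  simp [kill, h]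

theorem kill_of_mem {u : V} {S : Set V} (hu : u ∉ S) {x : GraphProduct Γ G}
    (hx : x ∈ vertexSubgroup Γ G S) : kill u x = x := by
  have : vertexSubgroup Γ G S ≤ (kill u : GraphProduct Γ G →* _).eqLocus (MonoidHom.id _) :=
    vertexSubgroup_le fun w hw a => kill_ne (fun h => hu (by rw [← h]; exact hw)) a
  exact this hx

open Classical in
theorem gen_injective (u : V) : Function.Injective (gen Γ G u) := by
  have key : ∀ a, gplift (Γ := Γ) (Pi.mulSingle u (MonoidHom.id (G u)) : ∀ w, G w →* G u) (by
    intro w w' h a b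
    by_cases hw : w = u
    · have hw' : w' ≠ u := by rintro rfl; exact h.ne hw
      simp [Pi.mulSingle_eq_of_ne hw']
    · simp [Pi.mulSingle_eq_of_ne hw]) (gen Γ G u a) = a := by
    intro a
    simp
  intro a b hab
  rw [← key a, hab, key b]

theorem gen_not_mem {S : Set V} {u : V} (hu : u ∉ S) {a : G u} (ha : a ≠ 1) :
    gen Γ G u a ∉ vertexSubgroup Γ G S := by
  intro h
  have := kill_of_mem hu h
  rw [kill_self] at this
  exact ha (gen_injective u (by rw [← this, map_one]))

/-- An element fixed by all the `kill u` is trivial. -/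
theorem eq_one_of_kill [Fintype V] {x : GraphProduct Γ G} (h : ∀ u, kill u x = x) : x = 1 := by
  classical
  have key : ∀ l : List V, ∃ f : GraphProduct Γ G →* GraphProduct Γ G, f x = x ∧
      (∀ u a, f (gen Γ G u a) = 1 ∨ f (gen Γ G u a) = gen Γ G u a) ∧
      ∀ u ∈ l, ∀ a, f (gen Γ G u a) = 1 := by
    intro l
    induction l with
    | nil => exact ⟨MonoidHom.id _, rfl, fun _ _ => Or.inr rfl, by simp⟩
    | cons w l ih =>
      obtain ⟨f, h1, h2, h3⟩ := ih
      refine ⟨(kill w).comp f, by simp [h1, h], ?_, ?_⟩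
      · intro u a
        rcases h2 u a with h2 | h2
        · left; simp [h2]
        · by_cases hu : u = w
          · subst hu; left; simp [h2, kill_self]
          · right; simp [h2, kill_ne hu]
      · intro u hu a
        rcases List.mem_cons.1 hu with rfl | hu
        · rcases h2 u a with h2 | h2
          · simp [h2]
          · simp [h2, kill_self]
        · simp [h3 u hu a]
  obtain ⟨f, h1, -, h3⟩ := key Finset.univ.toList
  rw [← h1]
  exact gp_hom_ext (f := f) (g := 1) (fun u a => h3 u (by simp) a) x

variable (Γ G) in
/-- the subgroup of the link -/
abbrev Lk (v : V) : Subgroup (GraphProduct Γ G) := vertexSubgroup Γ G (Γ.neighborSet v)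

theorem lk_comm {v : V} {h : GraphProduct Γ G} (hh : h ∈ Lk Γ G v) (a : G v) :
    Commute h (gen Γ G v a) := by
  have : Lk Γ G v ≤ Subgroup.centralizer {gen Γ G v a} :=
    vertexSubgroup_le fun w hw b => by
      rw [Subgroup.mem_centralizer_singleton_iff]
      exact (gen_comm (show Γ.Adj v w from hw) a b).symm
  exact Subgroup.mem_centralizer_singleton_iff.1 (this hh)

variable (Γ G) in
/-- cosets of the link subgroup -/
abbrev Cos (v : V) : Type := GraphProduct Γ G ⧸ Lk Γ G v

variable (Γ G) in
/-- the base coset -/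
abbrev c0 (v : V) : Cos Γ G v := QuotientGroup.mk 1

variable (Γ G) in
/-- the semidirect product attached to `v` -/
abbrev SPv (v : V) : Type := SP (GraphProduct Γ G) (Cos Γ G v) (G v)

variable (Γ G) in
/-- a letter -/
def letter (v : V) (c : Cos Γ G v) : G v →* FP (Cos Γ G v) (G v) :=
  CoprodI.of (M := fun _ : Cos Γ G v => G v) (i := c)

open Classical in
variable (Γ G) in
/-- images of the generators -/
noncomputable def phiGen (v w : V) : G w →* SPv Γ G v :=
  if h : w = v then
    h.symm ▸ ((SemidirectProduct.inl).comp (letter Γ G v (c0 Γ G v)) : G v →* SPv Γ G v)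
  else (SemidirectProduct.inr).comp (gen Γ G w)

theorem phiGen_self (v : V) (a : G v) :
    phiGen Γ G v v a = SemidirectProduct.inl (letter Γ G v (c0 Γ G v) a) := by
  simp [phiGen]

theorem phiGen_ne {v w : V} (h : w ≠ v) (a : G w) :
    phiGen Γ G v w a = SemidirectProduct.inr (gen Γ G w a) := by
  simp [phiGen, h]

theorem lk_smul_c0 {v : V} {b : GraphProduct Γ G} : b • c0 Γ G v = c0 Γ G v ↔ b ∈ Lk Γ G v := by
  rw [c0, MulAction.Quotient.smul_mk, eq_comm, QuotientGroup.eq]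
  simp

theorem perm_letter {v : V} (b : GraphProduct Γ G) (c : Cos Γ G v) (a : G v) :
    permAut b (letter Γ G v c a) = letter Γ G v (b • c) a :=
  permAut_of b c a

theorem inr_inl {v : V} (b : GraphProduct Γ G) (c : Cos Γ G v) (a : G v) :
    (SemidirectProduct.inr b : SPv Γ G v) * SemidirectProduct.inl (letter Γ G v c a) =
      SemidirectProduct.inl (letter Γ G v (b • c) a) * SemidirectProduct.inr b := by
  rw [← perm_letter, SemidirectProduct.inl_aut]
  simp [mul_assoc]

theorem phiGen_comm_aux {v w : V} (h : Γ.Adj v w) (a : G v) (b : G w) :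
    Commute (phiGen Γ G v v a) (phiGen Γ G v w b) := by
  rw [phiGen_self, phiGen_ne h.ne', commute_iff_eq, inr_inl,
    lk_smul_c0.2 (gen_mem (S := Γ.neighborSet v) h b)]

variable (Γ G) in
/-- the map to the semidirect product -/
noncomputable def phi (v : V) : GraphProduct Γ G →* SPv Γ G v :=
  gplift (phiGen Γ G v) (by
    intro u w h a b
    by_cases hu : u = v
    · subst hu; exact phiGen_comm_aux h a b
    · by_cases hw : w = v
      · subst hw; exact (phiGen_comm_aux h.symm b a).symm
      · rw [phiGen_ne hu, phiGen_ne hw]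
        exact (gen_comm h a b).map _)

theorem phi_self (v : V) (a : G v) :
    phi Γ G v (gen Γ G v a) = SemidirectProduct.inl (letter Γ G v (c0 Γ G v) a) := by
  rw [phi, gplift_gen, phiGen_self]

theorem phi_ne {v w : V} (h : w ≠ v) (a : G w) :
    phi Γ G v (gen Γ G w a) = SemidirectProduct.inr (gen Γ G w a) := by
  rw [phi, gplift_gen, phiGen_ne h]

theorem out_conj {v : V} (x : GraphProduct Γ G) (a : G v) :
    (QuotientGroup.mk x : Cos Γ G v).out * gen Γ G v a * (QuotientGroup.mk x : Cos Γ G v).out⁻¹ =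
      x * gen Γ G v a * x⁻¹ := by
  obtain ⟨h, hh⟩ := QuotientGroup.mk_out_eq_mul (Lk Γ G v) x
  rw [hh, mul_assoc x, (lk_comm h.2 a).eq]
  group

variable (Γ G) in
/-- the map from the free product -/
noncomputable def psiF (v : V) : FP (Cos Γ G v) (G v) →* GraphProduct Γ G :=
  CoprodI.lift fun c => (MulAut.conj c.out).toMonoidHom.comp (gen Γ G v)

theorem psiF_letter {v : V} (c : Cos Γ G v) (a : G v) :
    psiF Γ G v (letter Γ G v c a) = c.out * gen Γ G v a * c.out⁻¹ := by
  rw [psiF, letter, CoprodI.lift_of]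
  simp

variable (Γ G) in
/-- the map from the semidirect product -/
noncomputable def psi (v : V) : SPv Γ G v →* GraphProduct Γ G :=
  SemidirectProduct.lift (psiF Γ G v) (MonoidHom.id _) (by
    intro g
    refine CoprodI.ext_hom _ _ fun c => ?_
    ext a
    have h1 := psiF_letter (g • c) a
    have h2 := psiF_letter c a
    rw [← perm_letter] at h1
    obtain ⟨x, rfl⟩ := QuotientGroup.mk_surjective c
    rw [MulAction.Quotient.smul_mk, out_conj] at h1
    rw [out_conj] at h2
    refine h1.trans ?_
    change _ = g * psiF Γ G v (letter Γ G v _ a) * g⁻¹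
    rw [h2, smul_eq_mul]
    group)

theorem psi_phi (v : V) (x : GraphProduct Γ G) : psi Γ G v (phi Γ G v x) = x := by
  refine gp_hom_ext (f := (psi Γ G v).comp (phi Γ G v)) (g := MonoidHom.id _) (fun u a => ?_) x
  by_cases h : u = v
  · subst h
    rw [MonoidHom.comp_apply, phi_self, psi, SemidirectProduct.lift_inl, psiF_letter, out_conj]
    simp
  · rw [MonoidHom.comp_apply, phi_ne h, psi, SemidirectProduct.lift_inr]

theorem phi_decomp (v : V) (x : GraphProduct Γ G) :
    x = psiF Γ G v (phi Γ G v x).left * (phi Γ G v x).right := by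
  conv_lhs => rw [← psi_phi v x, ← SemidirectProduct.inl_left_mul_inr_right (phi Γ G v x)]
  rw [map_mul, psi, SemidirectProduct.lift_inl, SemidirectProduct.lift_inr]
  rfl

/-- elements not involving `v` have trivial free part -/
theorem phi_left_of_mem {v : V} {S : Set V} (hv : v ∉ S) {x : GraphProduct Γ G}
    (hx : x ∈ vertexSubgroup Γ G S) : (phi Γ G v x).left = 1 := by
  have : vertexSubgroup Γ G S ≤
      ((SemidirectProduct.inr : GraphProduct Γ G →* SPv Γ G v).range).comap (phi Γ G v) :=
    vertexSubgroup_le fun w hw a => ⟨gen Γ G w a, (phi_ne (fun h => hv (by rw [← h]; exact hw)) a).symm⟩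
  obtain ⟨y, hy⟩ := this hx
  rw [← hy, SemidirectProduct.left_inr]

theorem fst_letter {v : V} (c : Cos Γ G v) {a : G v} (ha : a ≠ 1) :
    fst (letter Γ G v c a) = some c := by
  simp [fst, letter, nf_of c ha]

/-- A normal subgroup with trivial free parts lies in the link subgroup. -/
theorem le_lk [∀ v, Nontrivial (G v)] {v : V} {M : Subgroup (GraphProduct Γ G)} [M.Normal]
    (hM : ∀ m ∈ M, (phi Γ G v m).left = 1) : M ≤ Lk Γ G v := by
  intro m hm
  obtain ⟨a, ha⟩ := exists_ne (1 : G v)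
  have h1 := hM _ (M.mul_mem hm (Subgroup.Normal.conj_mem ‹_› _ (M.inv_mem hm) (gen Γ G v a)))
  have hml := hM m hm
  have hmr := phi_decomp v m
  rw [hml, map_one, one_mul] at hmr
  have hphi : phi Γ G v m = SemidirectProduct.inr m := by
    rw [← SemidirectProduct.inl_left_mul_inr_right (phi Γ G v m), hml, ← hmr, map_one, one_mul]
  rw [map_mul, map_mul, map_mul, map_inv, map_inv, phi_self, hphi] at h1
  have h2 : (SemidirectProduct.inr m : SPv Γ G v) *
      (SemidirectProduct.inl (letter Γ G v (c0 Γ G v) a) * (SemidirectProduct.inr m)⁻¹ *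
        (SemidirectProduct.inl (letter Γ G v (c0 Γ G v) a))⁻¹) =
      SemidirectProduct.inl (letter Γ G v (m • c0 Γ G v) a * (letter Γ G v (c0 Γ G v) a)⁻¹) := by
    rw [map_mul, map_inv, ← mul_assoc, ← mul_assoc, inr_inl]
    group
  rw [h2, SemidirectProduct.left_inl, mul_inv_eq_one] at h1
  have h3 := congrArg fst h1
  rw [fst_letter _ ha, fst_letter _ ha] at h3
  exact lk_smul_c0.1 (Option.some_injective _ h3)

/-- almost invariance -/
theorem almost_inv {v : V} (c : Cos Γ G v) (s : GraphProduct Γ G) :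
    ∃ Q : Set (GraphProduct Γ G), Q.Finite ∧ ∀ g,
      ¬ (fst (phi Γ G v g).left = some c ↔ fst (phi Γ G v (g * s)).left = some c) →
      ∃ q ∈ Q, c.out⁻¹ * g * q⁻¹ ∈ Lk Γ G v := by
  let P : Subgroup (GraphProduct Γ G) :=
    { carrier := {s | ∃ Q : Set (GraphProduct Γ G), Q.Finite ∧ ∀ g,
        ¬ (fst (phi Γ G v g).left = some c ↔ fst (phi Γ G v (g * s)).left = some c) →
        ∃ q ∈ Q, c.out⁻¹ * g * q⁻¹ ∈ Lk Γ G v}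
      one_mem' := ⟨∅, Set.finite_empty, fun g h => by simp at h⟩
      mul_mem' := by
        rintro s t ⟨Q, hQ, h⟩ ⟨R, hR, k⟩
        refine ⟨Q ∪ (· * s⁻¹) '' R, hQ.union (hR.image _), fun g hg => ?_⟩
        by_cases h1 : (fst (phi Γ G v g).left = some c ↔ fst (phi Γ G v (g * s)).left = some c)
        · rw [h1, ← mul_assoc] at hg
          obtain ⟨q, hq, hq'⟩ := k _ hg
          refine ⟨q * s⁻¹, Or.inr ⟨q, hq, rfl⟩, ?_⟩
          convert hq' using 1
          group
        · obtain ⟨q, hq, hq'⟩ := h g h1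
          exact ⟨q, Or.inl hq, hq'⟩
      inv_mem' := by
        rintro s ⟨Q, hQ, h⟩
        refine ⟨(· * s) '' Q, hQ.image _, fun g hg => ?_⟩
        obtain ⟨q, hq, hq'⟩ := h (g * s⁻¹) (by rw [inv_mul_cancel_right]; exact fun h => hg h.symm)
        refine ⟨q * s, ⟨q, hq, rfl⟩, ?_⟩
        convert hq' using 1
        group }
  refine mem_of_gens (P := P) (fun u a => ?_) s
  by_cases hu : u = v
  · subst hu
    refine ⟨{1, (gen Γ G u a)⁻¹}, by simp, fun g hg => ?_⟩
    have hm : (phi Γ G u (g * gen Γ G u a)).left = (phi Γ G u g).left *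
        CoprodI.of (M := fun _ : Cos Γ G u => G u) (i := (phi Γ G u g).right • c0 Γ G u) a := by
      rw [map_mul, phi_self, SemidirectProduct.mul_left, SemidirectProduct.left_inl, perm_letter]
      rfl
    rw [hm] at hg
    obtain ⟨hd, hx⟩ := fst_mul_of hg
    have hc : c.out⁻¹ * (phi Γ G u g).right ∈ Lk Γ G u := by
      rw [← QuotientGroup.eq, QuotientGroup.out_eq', ← hd, c0, MulAction.Quotient.smul_mk]
      simp
    have hdec := phi_decomp u g
    rcases hx with hx | hx
    · rw [hx, map_one, one_mul] at hdec
      refine ⟨1, by simp, ?_⟩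
      rw [← hdec] at hc
      simpa using hc
    · refine ⟨(gen Γ G u a)⁻¹, by simp, ?_⟩
      have hx' : (phi Γ G u g).left = letter Γ G u c a⁻¹ := by
        rw [hx, hd]; rfl
      rw [hx', psiF_letter, map_inv] at hdec
      have hcomm := (lk_comm hc a).eq
      convert hc using 1
      rw [inv_inv]
      calc c.out⁻¹ * g * gen Γ G u a
          = c.out⁻¹ * (c.out * (gen Γ G u a)⁻¹ * c.out⁻¹ * (phi Γ G u g).right) * gen Γ G u a := by
            rw [← hdec]
        _ = (gen Γ G u a)⁻¹ * (c.out⁻¹ * (phi Γ G u g).right * gen Γ G u a) := by group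
        _ = c.out⁻¹ * (phi Γ G u g).right := by rw [hcomm]; group
  · refine ⟨∅, Set.finite_empty, fun g hg => ?_⟩
    rw [map_mul, phi_ne hu, SemidirectProduct.mul_left, SemidirectProduct.left_inr, map_one,
      mul_one] at hg
    simp at hg

end GP

end GPAux

/-! ### Part 3: the main argument -/

namespace GPAux

open Monoid

section Main

variable {V : Type} {Γ : SimpleGraph V} {G : V → Type} [∀ v, Group (G v)]

theorem key {v : V} {f g : GraphProduct Γ G} {c : Cos Γ G v}
    (hf : fst (phi Γ G v f).left = some c)
    (h : fst (phi Γ G v f⁻¹).left ≠ fst (phi Γ G v g).left) :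
    fst (phi Γ G v (f * g)).left = some c ∧
      (nf (phi Γ G v (f * g)).left).length =
        (nf (phi Γ G v f).left).length + (nf (phi Γ G v g).left).length := by
  rw [map_inv] at h
  rw [map_mul]
  exact SP_key hf h

theorem exists_fst {v : V} {f : GraphProduct Γ G} (hf : (phi Γ G v f).left ≠ 1) :
    ∃ c, fst (phi Γ G v f).left = some c :=
  Option.ne_none_iff_exists'.1 fun h => hf (fst_eq_none.1 h)

theorem left_inv_ne {v : V} {f : GraphProduct Γ G} (hf : (phi Γ G v f).left ≠ 1) :
    (phi Γ G v f⁻¹).left ≠ 1 := by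
  rw [map_inv, SemidirectProduct.inv_left]
  simpa using hf

theorem left_ne_of_fst {v : V} {f : GraphProduct Γ G} {c : Cos Γ G v}
    (hf : fst (phi Γ G v f).left = some c) : (phi Γ G v f).left ≠ 1 := by
  intro h
  rw [fst_eq_none.2 h] at hf
  cases hf

theorem exists_hyperbolic [∀ v, Nontrivial (G v)] {v : V} (hnc : ¬ IsCentralVertex Γ v)
    (N : Subgroup (GraphProduct Γ G)) [N.Normal] {n : GraphProduct Γ G} (hn : n ∈ N)
    (hne : (phi Γ G v n).left ≠ 1) :
    ∃ f ∈ N, ∃ c, fst (phi Γ G v f).left = some c ∧ fst (phi Γ G v f⁻¹).left ≠ some c := by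
  obtain ⟨c, hc⟩ := exists_fst hne
  by_cases hc' : fst (phi Γ G v n⁻¹).left = some c
  swap
  · exact ⟨n, hn, c, hc, hc'⟩
  obtain ⟨a, ha⟩ := exists_ne (1 : G v)
  have hlet : ∃ t d, d ≠ c ∧ fst (phi Γ G v t).left = some d ∧
      fst (phi Γ G v t⁻¹).left = some d := by
    have hgen : ∀ a : G v, a ≠ 1 → fst (phi Γ G v (gen Γ G v a)).left = some (c0 Γ G v) := by
      intro a ha
      rw [phi_self, SemidirectProduct.left_inl, fst_letter _ ha]
    by_cases h0 : c0 Γ G v = c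
    · simp only [IsCentralVertex, not_forall] at hnc
      obtain ⟨u, huv, hu⟩ := hnc
      obtain ⟨b, hb⟩ := exists_ne (1 : G u)
      have hconj : ∀ a : G v, a ≠ 1 →
          fst (phi Γ G v (gen Γ G u b * gen Γ G v a * (gen Γ G u b)⁻¹)).left
            = some (gen Γ G u b • c0 Γ G v) := by
        intro a ha
        rw [map_mul, map_mul, map_inv, phi_self, phi_ne huv, inr_inl, mul_inv_cancel_right,
          SemidirectProduct.left_inl, fst_letter _ ha]
      refine ⟨gen Γ G u b * gen Γ G v a * (gen Γ G u b)⁻¹, gen Γ G u b • c0 Γ G v, ?_,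
        hconj a ha, ?_⟩
      · rw [← h0]
        intro h
        exact gen_not_mem (S := Γ.neighborSet v) hu hb (lk_smul_c0.1 h)
      · rw [← hconj a⁻¹ (inv_ne_one.2 ha)]
        congr 3
        rw [map_inv]
        group
    · exact ⟨gen Γ G v a, c0 Γ G v, h0, hgen a ha, by
        rw [← map_inv]; exact hgen _ (inv_ne_one.2 ha)⟩
  obtain ⟨t, d, hd, ht, ht'⟩ := hlet
  have hsd : some c ≠ some d := fun h => hd (Option.some_injective _ h).symm
  have h1 : ∀ m, fst (phi Γ G v m).left = some c → fst (phi Γ G v m⁻¹).left = some c →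
      fst (phi Γ G v (t * (m * t⁻¹))).left = some d := by
    intro m hm hm'
    have := (key (f := m) (g := t⁻¹) hm (by rw [hm', ht']; exact hsd)).1
    exact (key ht (by rw [this, ht']; exact hsd.symm)).1
  have h2 := h1 n hc hc'
  have h3 := h1 n⁻¹ hc' (by rw [inv_inv]; exact hc)
  refine ⟨n * (t * (n * t⁻¹)), ?_, c, ?_, ?_⟩
  · refine N.mul_mem hn ?_
    rw [← mul_assoc]
    exact Subgroup.Normal.conj_mem ‹_› _ hn t
  · exact (key hc (by rw [hc', h2]; exact hsd)).1
  · have h4 : (n * (t * (n * t⁻¹)))⁻¹ = (t * (n⁻¹ * t⁻¹)) * n⁻¹ := by group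
    have h5 : (t * (n⁻¹ * t⁻¹))⁻¹ = t * (n * t⁻¹) := by group
    rw [h4, (key h3 (by rw [h5, h2, hc']; exact hsd.symm)).1]
    exact hsd.symm

theorem finiteIndex_of_hyperbolic {v : V} (N : Subgroup (GraphProduct Γ G)) [N.Normal]
    (hfg : N.FG) {f : GraphProduct Γ G} (hf : f ∈ N) {c : Cos Γ G v}
    (h1 : fst (phi Γ G v f).left = some c) (h2 : fst (phi Γ G v f⁻¹).left ≠ some c) :
    (N ⊔ vertexSubgroup Γ G (Γ.neighborSet v)).FiniteIndex := by
  set K := N ⊔ vertexSubgroup Γ G (Γ.neighborSet v) with hK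
  have hNK : N ≤ K := le_sup_left
  have hLK : Lk Γ G v ≤ K := le_sup_right
  have dyn1 : ∀ l : ℕ, ∀ g, (nf (phi Γ G v g).left).length ≤ l →
      ∃ n ∈ N, fst (phi Γ G v (n * g)).left ≠ some c := by
    intro l
    induction l with
    | zero =>
      intro g hg
      refine ⟨1, N.one_mem, fun h => ?_⟩
      rw [one_mul] at h
      have := nf_pos h
      omega
    | succ l ih =>
      intro g hg
      by_cases h : fst (phi Γ G v (f⁻¹ * g)).left = some c
      · have hk := (key (g := f⁻¹ * g) h1 (by rw [h]; exact h2)).2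
        rw [mul_inv_cancel_left] at hk
        have := nf_pos h1
        obtain ⟨n, hn, hn'⟩ := ih (f⁻¹ * g) (by omega)
        exact ⟨n * f⁻¹, N.mul_mem hn (N.inv_mem hf), by rw [mul_assoc]; exact hn'⟩
      · exact ⟨f⁻¹, N.inv_mem hf, h⟩
  obtain ⟨d, hd⟩ := exists_fst (left_inv_ne (left_ne_of_fst h1))
  have dyn2 : ∀ l : ℕ, ∀ g, (nf (phi Γ G v g).left).length ≤ l →
      ∃ n ∈ N, fst (phi Γ G v (n * g)).left = some c := by
    have hstep : ∀ g, fst (phi Γ G v (f * g)).left ≠ some c →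
        (nf (phi Γ G v (f * g)).left).length < (nf (phi Γ G v g).left).length := by
      intro g h
      have hk := (key (f := f⁻¹) (g := f * g) hd (by rw [inv_inv, h1]; exact h.symm)).2
      rw [inv_mul_cancel_left] at hk
      have := nf_pos hd
      omega
    intro l
    induction l with
    | zero =>
      intro g hg
      refine ⟨f, hf, ?_⟩
      by_contra h
      have := hstep g h
      omega
    | succ l ih =>
      intro g hg
      by_cases h : fst (phi Γ G v (f * g)).left = some c
      · exact ⟨f, hf, h⟩
      · have := hstep g h
        obtain ⟨n, hn, hn'⟩ := ih (f * g) (by omega)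
        exact ⟨n * f, N.mul_mem hn hf, by rw [mul_assoc]; exact hn'⟩
  obtain ⟨S, hS⟩ := hfg
  choose Q hQ hQ' using almost_inv (Γ := Γ) (G := G) c
  let R : Set (GraphProduct Γ G) := ⋃ s ∈ S, Q s
  have hR : R.Finite := S.finite_toSet.biUnion fun s _ => hQ s
  have hall : ∀ n ∈ N, ∀ g,
      ¬ (fst (phi Γ G v g).left = some c ↔ fst (phi Γ G v (g * n)).left = some c) →
      ∃ q ∈ R, c.out⁻¹ * g * q⁻¹ ∈ K := by
    intro n hn
    rw [← hS] at hn
    induction hn using Subgroup.closure_induction with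
    | mem s hs =>
      intro g hg
      obtain ⟨q, hq, hq'⟩ := hQ' s g hg
      exact ⟨q, Set.mem_biUnion hs hq, hLK hq'⟩
    | one => intro g hg; simp at hg
    | mul s t hs ht ihs iht =>
      intro g hg
      rw [hS] at hs
      by_cases h : (fst (phi Γ G v g).left = some c ↔ fst (phi Γ G v (g * s)).left = some c)
      · rw [h, ← mul_assoc] at hg
        obtain ⟨q, hq, hq'⟩ := iht _ hg
        refine ⟨q, hq, ?_⟩
        have : c.out⁻¹ * g * q⁻¹ = c.out⁻¹ * (g * s) * q⁻¹ * (q * s⁻¹ * q⁻¹) := by group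
        rw [this]
        exact K.mul_mem hq' (hNK (Subgroup.Normal.conj_mem ‹_› _ (N.inv_mem hs) q))
      · exact ihs g h
    | inv s hs ihs =>
      intro g hg
      rw [hS] at hs
      obtain ⟨q, hq, hq'⟩ := ihs (g * s⁻¹)
        (by rw [inv_mul_cancel_right]; exact fun h => hg h.symm)
      refine ⟨q, hq, ?_⟩
      have : c.out⁻¹ * g * q⁻¹ = c.out⁻¹ * (g * s⁻¹) * q⁻¹ * (q * s * q⁻¹) := by group
      rw [this]
      exact K.mul_mem hq' (hNK (Subgroup.Normal.conj_mem ‹_› _ hs q))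
  have hcov : ∀ g, ∃ q ∈ R, c.out⁻¹ * g * q⁻¹ ∈ K := by
    intro g
    obtain ⟨n, hn, hn'⟩ := dyn1 _ g le_rfl
    obtain ⟨m, hm, hm'⟩ := dyn2 _ g le_rfl
    by_cases h : fst (phi Γ G v g).left = some c
    · refine hall (g⁻¹ * n * g) ?_ g ?_
      · simpa using Subgroup.Normal.conj_mem ‹_› _ hn g⁻¹
      · have : g * (g⁻¹ * n * g) = n * g := by group
        rw [this]
        exact fun h' => hn' (h'.1 h)
    · refine hall (g⁻¹ * m * g) ?_ g ?_
      · simpa using Subgroup.Normal.conj_mem ‹_› _ hm g⁻¹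
      · have : g * (g⁻¹ * m * g) = m * g := by group
        rw [this]
        exact fun h' => h (h'.2 hm')
  have : Finite R := hR
  have hfin : Finite (GraphProduct Γ G ⧸ K) := by
    refine Finite.of_surjective
      (fun q : R => (QuotientGroup.mk (q.1⁻¹) : GraphProduct Γ G ⧸ K)) ?_
    intro x
    obtain ⟨y, rfl⟩ := QuotientGroup.mk_surjective x
    obtain ⟨q, hq, hq'⟩ := hcov (c.out * y⁻¹)
    refine ⟨⟨q, hq⟩, ?_⟩
    rw [eq_comm, QuotientGroup.eq]
    rwa [inv_mul_cancel_left] at hq'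
  exact Subgroup.finiteIndex_of_finite_quotient

theorem exists_joinDecomposition [Fintype V] (Γ : SimpleGraph V) :
    ∃ (k : ℕ) (P : Fin k → Set V), IsJoinDecomposition Γ P := by
  classical
  obtain ⟨k, ⟨e⟩⟩ := Finite.exists_equiv_fin (Γᶜ.ConnectedComponent)
  refine ⟨k, fun i => (e.symm i).supp, ?_, ?_, ?_, ?_⟩
  · intro i
    exact (e.symm i).nonempty_supp
  · intro v
    refine ⟨e (Γᶜ.connectedComponentMk v), by simp, ?_⟩
    intro i hi
    simp only [SimpleGraph.ConnectedComponent.mem_supp_iff] at hi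
    rw [hi]; simp
  · intro i j hij a ha b hb
    simp only [SimpleGraph.ConnectedComponent.mem_supp_iff] at ha hb
    have hab : Γᶜ.connectedComponentMk a ≠ Γᶜ.connectedComponentMk b := by
      rw [ha, hb]
      exact fun h => hij (e.symm.injective h)
    by_contra hadj
    apply hab
    apply SimpleGraph.ConnectedComponent.sound
    apply SimpleGraph.Adj.reachable
    rw [SimpleGraph.compl_adj]
    exact ⟨fun h => hab (by rw [h]), hadj⟩
  · rintro i ⟨A, B, ⟨a, ha⟩, ⟨b, hb⟩, hd, hu, hadj⟩
    change A ∪ B = (e.symm i).supp at hu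
    have hsa : a ∈ (e.symm i).supp := by rw [← hu]; exact Or.inl ha
    have hsb : b ∈ (e.symm i).supp := by rw [← hu]; exact Or.inr hb
    have hwalk : ∀ {x y : V} (p : Γᶜ.Walk x y), x ∈ A → y ∈ A := by
      intro x y p
      induction p with
      | nil => exact id
      | @cons x z y h p ih =>
        intro hx
        apply ih
        by_contra hz
        have hxs : x ∈ (e.symm i).supp := by rw [← hu]; exact Or.inl hx
        have hzs : z ∈ (e.symm i).supp := by
          rw [SimpleGraph.ConnectedComponent.mem_supp_iff] at hxs ⊢
          rw [← hxs]
          exact (SimpleGraph.ConnectedComponent.sound h.reachable).symm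
        rw [← hu] at hzs
        rcases hzs with hz' | hz'
        · exact hz hz'
        · exact ((SimpleGraph.compl_adj _ _ _).1 h).2 (hadj x hx z hz')
    rw [SimpleGraph.ConnectedComponent.mem_supp_iff] at hsa hsb
    obtain ⟨p⟩ := SimpleGraph.ConnectedComponent.exact (hsa.trans hsb.symm)
    exact Set.disjoint_left.1 hd (hwalk p ha) hb

theorem vertexSubgroup_normal {k : ℕ} {P : Fin k → Set V} (hP : IsJoinDecomposition Γ P)
    (i : Fin k) : (vertexSubgroup Γ G (P i)).Normal := by
  have h : ∀ g : GraphProduct Γ G, g ∈ Subgroup.normalizer (vertexSubgroup Γ G (P i) : Set _) := by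
    refine mem_of_gens fun u a => ?_
    by_cases hu : u ∈ P i
    · exact Subgroup.le_normalizer (gen_mem hu a)
    · apply Subgroup.centralizer_le_normalizer
      rw [Subgroup.mem_centralizer_iff]
      intro x hx
      have : vertexSubgroup Γ G (P i) ≤ Subgroup.centralizer {gen Γ G u a} :=
        vertexSubgroup_le fun w hw b => by
          rw [Subgroup.mem_centralizer_singleton_iff]
          obtain ⟨j, hj, -⟩ := hP.2.1 u
          have hij : i ≠ j := by rintro rfl; exact hu hj
          exact (gen_comm (hP.2.2.1 i j hij w hw u hj) b a)
      exact Subgroup.mem_centralizer_singleton_iff.1 (this hx)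
  rw [← Subgroup.normalizer_eq_top_iff]
  exact eq_top_iff.2 fun g _ => h g

theorem not_le_lk [Fintype V] [∀ v, Nontrivial (G v)] (N : Subgroup (GraphProduct Γ G)) [N.Normal]
    {k : ℕ} {P : Fin k → Set V} (hP : IsJoinDecomposition Γ P) {i : Fin k} {v : V} (hv : v ∈ P i)
    (hfull : N ⊓ vertexSubgroup Γ G (P i) ≠ ⊥) : ¬ N ≤ Lk Γ G v := by
  intro hN
  set M := N ⊓ vertexSubgroup Γ G (P i) with hM
  have := vertexSubgroup_normal (G := G) hP i
  have hMn : M.Normal := inferInstance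
  have hstep : ∀ w : V, ∀ T : Set V, w ∉ T → M ≤ vertexSubgroup Γ G T → M ≤ Lk Γ G w :=
    fun w T hw hT => le_lk fun m hm => phi_left_of_mem hw (hT hm)
  let S : Set V := {u | ¬ M ≤ Lk Γ G u}
  have hSP : S ⊆ P i := by
    intro u hu
    by_contra hui
    exact hu (hstep u (P i) hui inf_le_right)
  have hvS : v ∉ S := fun h => h (inf_le_left.trans hN)
  apply hP.2.2.2 i
  refine ⟨S, P i \ S, ?_, ⟨v, hv, hvS⟩, Set.disjoint_sdiff_right, Set.union_sdiff_cancel hSP, ?_⟩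
  · by_contra hS
    rw [Set.not_nonempty_iff_eq_empty] at hS
    apply hfull
    rw [eq_bot_iff]
    intro x hx
    rw [Subgroup.mem_bot]
    apply eq_one_of_kill
    intro u
    have hu : u ∉ S := by rw [hS]; simp
    have hu' : M ≤ Lk Γ G u := by
      by_contra h
      exact hu h
    exact kill_of_mem (S := Γ.neighborSet u) (by simp) (hu' hx)
  · rintro w hw u ⟨-, hu⟩
    have hu' : M ≤ Lk Γ G u := by
      by_contra h
      exact hu h
    by_contra hadj
    exact hw (hstep w (Γ.neighborSet u) (fun h => hadj (SimpleGraph.Adj.symm h)) hu')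

end Main

end GPAux

theorem finite_index_of_N_join_link_subgroup
    {V : Type} [Fintype V] (Γ : SimpleGraph V) (G : V → Type)
    [∀ v, Group (G v)] [∀ v, Nontrivial (G v)]
    (hnc : ∀ v : V, ¬ IsCentralVertex Γ v)
    (N : Subgroup (GraphProduct Γ G)) [N.Normal]
    (hfg : N.FG) (hfull : IsFullSubgroup Γ G N) :
    ∀ v : V, (N ⊔ vertexSubgroup Γ G (Γ.neighborSet v)).FiniteIndex := by
    classical
  intro v
  obtain ⟨k, P, hP⟩ := GPAux.exists_joinDecomposition Γ
  obtain ⟨i, hvi, -⟩ := hP.2.1 v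
  obtain ⟨n, hn, hne⟩ : ∃ n ∈ N, (GPAux.phi Γ G v n).left ≠ 1 := by
    by_contra hcon
    push Not at hcon
    exact GPAux.not_le_lk N hP hvi (hfull k P hP i) (GPAux.le_lk hcon)
  obtain ⟨f, hf, c, h1, h2⟩ := GPAux.exists_hyperbolic (hnc v) N hn hne
  exact GPAux.finiteIndex_of_hyperbolic N hfg hf h1 h2
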